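/- Let p and q be distinct primes and let G be a group of order p²q. For every gamma function γ on G there exists a Sylow p-subgroup A of G which is invariant under γ(A). In particular, if p > 2, then the Sylow p-subgroups of G and of (G,∘) are isomorphic, where g ∘ h = g^{γ(h)}·h. -/

import Mathlib

/- Formalization of results from "Hopf-Galois structures on extensions of degree p²q and
skew braces of order p²q: the cyclic Sylow p-subgroup case" (Campedel, Caranti, Del Corso).

Conventions: the paper composes permutations/automorphisms left-to-right and writes
`x^α` for the action; in Mathlib composition is right-to-left, so the paper's product
`αβ` is rendered as `β * α`, the paper's `x^α` as `α x`, and the paper's conjugate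
`α^β = β⁻¹αβ` as `β * α * β⁻¹`. -/

namespace HGS

universe u v

variable {G : Type*} [Group G]

/-- A gamma function (GF) on `G`: a map `γ : G → Aut G` satisfying the gamma functional
equation `γ(g^{γ(h)}·h) = γ(g)γ(h)` (the right-hand side is the paper's product, which in
Mathlib's composition order reads `γ h * γ g`). -/
def IsGammaFunction (γ : G → MulAut G) : Prop :=
  ∀ g h : G, γ (γ h g * h) = γ h * γ g

/-- The circle operation `g ∘ h = g^{γ(h)} · h` associated to a gamma function. -/
def circ (γ : G → MulAut G) (g h : G) : G := γ h g * h

lemma card_map_dvd_of_isNilpotent {M : Type*} [AddCommGroup M] [Finite M] {p k : ℕ}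
    (hp : p.Prime) {δ : AddMonoid.End M} (hδ : IsNilpotent δ) {B : AddSubgroup M}
    (hB : B.map δ ≤ B) (hcard : Nat.card B ∣ p ^ (k + 1)) :
    Nat.card (B.map δ) ∣ p ^ k := by
  obtain ⟨i, hi, hBi⟩ := (Nat.dvd_prime_pow hp).1 hcard
  have hdvd : Nat.card (B.map δ) ∣ Nat.card B := AddSubgroup.card_dvd_of_le hB
  obtain ⟨j, hj, hBj⟩ := (Nat.dvd_prime_pow hp).1 (hBi ▸ hdvd)
  rcases hj.lt_or_eq with hlt | rfl
  · rw [hBj]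
    exact pow_dvd_pow p (by omega)
  · have heq : B.map δ = B := AddSubgroup.eq_of_le_of_card_ge hB (by rw [hBi, hBj])
    obtain ⟨n, hn⟩ := hδ
    have hpow : ∀ m : ℕ, ∀ x ∈ B, ∃ y ∈ B, (δ ^ m) y = x := by
      intro m
      induction m with
      | zero => exact fun x hx => ⟨x, hx, rfl⟩
      | succ m ih =>
        intro x hx
        obtain ⟨y, hy, rfl⟩ := ih x hx
        rw [← heq] at hy
        obtain ⟨z, hz, rfl⟩ := hy
        exact ⟨z, hz, by rw [pow_succ]; rfl⟩
    have hbot : B = ⊥ := by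
      refine (AddSubgroup.eq_bot_iff_forall B).2 fun x hx => ?_
      obtain ⟨y, -, rfl⟩ := hpow n x hx
      rw [hn]; rfl
    rw [heq, hbot]
    simp

lemma sq_eq_zero_of_isNilpotent {M : Type*} [AddCommGroup M] {p : ℕ}
    (hp : p.Prime) (hM : Nat.card M = p ^ 2) {δ : AddMonoid.End M} (hδ : IsNilpotent δ) :
    δ ^ 2 = 0 := by
  have : Finite M := Nat.finite_of_card_ne_zero (hM ▸ (pow_pos hp.pos 2).ne')
  have h₁ := card_map_dvd_of_isNilpotent (k := 1) hp hδ (B := ⊤) le_top (by simp [hM])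
  have h₂ := card_map_dvd_of_isNilpotent (k := 0) hp hδ (AddSubgroup.map_mono le_top) h₁
  rw [pow_zero, Nat.dvd_one, AddSubgroup.card_eq_one] at h₂
  ext x
  have hx : (δ ^ 2) x ∈ ((⊤ : AddSubgroup M).map δ).map δ :=
    ⟨δ x, ⟨x, trivial, rfl⟩, by rw [pow_two]; rfl⟩
  rw [h₂] at hx
  exact hx

lemma isNilpotent_sub_one {R : Type*} [Ring R] {p : ℕ} (hp : p.Prime)
    {m n : ℕ} (hR : (p : R) ^ m = 0) {σ : R} (hσ : σ ^ p ^ n = 1) : IsNilpotent (σ - 1) := by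
  obtain ⟨r, hr⟩ := (Commute.one_right (σ - 1)).exists_add_pow_prime_pow_eq hp n
  rw [sub_add_cancel, hσ, one_pow, mul_one, mul_assoc] at hr
  have hpow : (σ - 1) ^ p ^ n = p * (-((σ - 1) * r)) := by
    rw [mul_neg, eq_neg_iff_add_eq_zero]
    have := congrArg (· - 1) hr
    simp only [sub_self] at this
    rw [this]; abel
  refine ⟨p ^ n * m, ?_⟩
  rw [pow_mul, hpow, (Nat.cast_commute p _).mul_pow, hR, zero_mul]

lemma sum_one_add_pow_of_sq_eq_zero {R : Type*} [Ring R] {δ : R} (hδ : δ ^ 2 = 0) (n : ℕ) :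
    ∑ i ∈ Finset.range n, (1 + δ) ^ i = n + (n.choose 2 : ℕ) * δ := by
  have hpow : ∀ i : ℕ, (1 + δ) ^ i = 1 + i * δ := by
    intro i
    induction i with
    | zero => simp
    | succ i ih =>
      rw [pow_succ, ih, add_mul, mul_add ((i : R) * δ), mul_assoc _ δ δ, ← pow_two, hδ]
      push_cast
      noncomm_ring
  induction n with
  | zero => simp
  | succ n ih =>
    rw [Finset.sum_range_succ, ih, hpow, Nat.choose_succ_succ' n 1, Nat.choose_one_right]
    push_cast
    noncomm_ring

lemma isCyclic_of_card_eq_prime_sq {T : Type*} [Group T] {p : ℕ} (hp : p.Prime)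
    (hT : Nat.card T = p ^ 2) (h : ¬ ∀ x : T, x ^ p = 1) : IsCyclic T := by
  have := Fact.mk hp
  have : Finite T := Nat.finite_of_card_ne_zero (hT ▸ (pow_pos hp.pos 2).ne')
  push Not at h
  obtain ⟨x, hx⟩ := h
  refine isCyclic_of_orderOf_eq_card x ?_
  rw [hT]
  exact orderOf_eq_prime_pow (n := 1) (by simpa using hx) (hT ▸ pow_card_eq_one')

lemma nonempty_addEquiv_of_card_eq {V W : Type*} [AddCommGroup V] [AddCommGroup W] [Finite V]
    [Finite W] {p : ℕ} [Fact p.Prime] [Module (ZMod p) V] [Module (ZMod p) W]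
    (hcard : Nat.card V = Nat.card W) : Nonempty (V ≃+ W) := by
  rw [← FiniteField.pow_finrank_eq_natCard p V,
    ← FiniteField.pow_finrank_eq_natCard p W] at hcard
  have h : Nonempty (V ≃ₗ[ZMod p] W) :=
    FiniteDimensional.nonempty_linearEquiv_of_finrank_eq
      (Nat.pow_right_injective (Fact.out : p.Prime).two_le hcard)
  exact h.map LinearEquiv.toAddEquiv

lemma nonempty_addEquiv_of_nsmul_prime_eq_zero {V W : Type*} [AddCommGroup V] [AddCommGroup W]
    [Finite V] [Finite W] {p : ℕ} (hp : p.Prime) (hV : ∀ x : V, p • x = 0)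
    (hW : ∀ x : W, p • x = 0) (hcard : Nat.card V = Nat.card W) : Nonempty (V ≃+ W) := by
  have := Fact.mk hp
  let := AddCommGroup.zmodModule hV
  let := AddCommGroup.zmodModule hW
  exact nonempty_addEquiv_of_card_eq (p := p) hcard

/-- Two groups of order `p ^ 2` are isomorphic when both or neither of them have exponent `p`. -/
lemma nonempty_mulEquiv_of_card_eq_prime_sq {P Q : Type*} [Group P] [Group Q] {p : ℕ}
    (hp : p.Prime) (hP : Nat.card P = p ^ 2) (hQ : Nat.card Q = p ^ 2)
    (h : (∀ x : P, x ^ p = 1) ↔ ∀ y : Q, y ^ p = 1) : Nonempty (P ≃* Q) := by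
  have := Fact.mk hp
  by_cases hexp : ∀ x : P, x ^ p = 1
  · have hexp' := h.1 hexp
    have : Finite P := Nat.finite_of_card_ne_zero (hP ▸ (pow_pos hp.pos 2).ne')
    have : Finite Q := Nat.finite_of_card_ne_zero (hQ ▸ (pow_pos hp.pos 2).ne')
    let := IsPGroup.commGroupOfCardEqPrimeSq hP
    let := IsPGroup.commGroupOfCardEqPrimeSq hQ
    obtain ⟨f⟩ := nonempty_addEquiv_of_nsmul_prime_eq_zero (V := Additive P) (W := Additive Q)
      hp hexp hexp' (hP.trans hQ.symm)
    exact ⟨AddEquiv.toMultiplicative f⟩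
  · have := isCyclic_of_card_eq_prime_sq hp hP hexp
    have := isCyclic_of_card_eq_prime_sq hp hQ (fun hq => hexp (h.2 hq))
    exact ⟨mulEquivOfCyclicCardEq (hP.trans hQ.symm)⟩

lemma nsmul_prime_eq_zero_iff_pow_eq_one {M T : Type*} [AddCommGroup M] [Group T] {p : ℕ}
    (hp : p.Prime) (hp2 : 2 < p) (hM : Nat.card M = p ^ 2) (f : M ≃ T) (hf : f 0 = 1)
    {x : M} {σ : AddMonoid.End M} (hσ : ∀ a, f (σ a + x) = f a * f x) :
    p • x = 0 ↔ f x ^ p = 1 := by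
  have hpow : ∀ (n : ℕ) (a : M),
      f a * f x ^ n = f ((σ ^ n) a + (∑ i ∈ Finset.range n, σ ^ i) x) := by
    intro n a
    induction n with
    | zero => simp
    | succ n ih =>
      rw [pow_succ (f x), ← mul_assoc, ih, ← hσ, Finset.sum_range_succ', pow_zero]
      simp only [pow_succ', ← Finset.mul_sum]
      rw [map_add σ, add_assoc]
      rfl
  have hTcard : Nat.card T = p ^ 2 := (Nat.card_congr f).symm.trans hM
  have hx : f x ^ p ^ 2 = 1 := hTcard ▸ pow_card_eq_one'
  have hsum : (∑ i ∈ Finset.range (p ^ 2), σ ^ i) x = 0 := by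
    have := hpow (p ^ 2) 0
    rw [hf, one_mul, hx, map_zero, zero_add, ← hf] at this
    exact (f.injective this).symm
  have hσp : σ ^ p ^ 2 = 1 := by
    ext a
    have := hpow (p ^ 2) a
    rw [hx, mul_one, hsum, add_zero] at this
    exact (f.injective this).symm
  have hR : (p : AddMonoid.End M) ^ 2 = 0 := by
    ext a
    rw [← Nat.cast_pow, AddMonoid.End.natCast_apply, ← hM, card_nsmul_eq_zero']
    rfl
  have hnil := isNilpotent_sub_one hp hR hσp
  have hsq := sq_eq_zero_of_isNilpotent hp hM hnil
  set δ := σ - 1 with hδ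
  have hodd : p.choose 2 = p * ((p - 1) / 2) := by
    have : 2 ∣ p - 1 := (hp.even_sub_one hp2.ne').two_dvd
    rw [Nat.choose_two_right, Nat.mul_div_assoc _ this]
  have hfac : ∑ i ∈ Finset.range p, σ ^ i = (1 + ((p - 1) / 2 : ℕ) * δ) * p := by
    have := sum_one_add_pow_of_sq_eq_zero hsq p
    rw [hδ, add_sub_cancel, ← hδ] at this
    rw [this, hodd, ← (Nat.cast_commute p _).eq]
    push_cast
    noncomm_ring
  have hunit : IsUnit (1 + (((p - 1) / 2 : ℕ) : AddMonoid.End M) * δ) :=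
    ((Nat.cast_commute _ δ).isNilpotent_mul_left hnil).isUnit_one_add
  have key : f x ^ p = 1 ↔ (∑ i ∈ Finset.range p, σ ^ i) x = 0 := by
    have := hpow p 0
    rw [hf, one_mul, map_zero, zero_add] at this
    rw [this, ← hf, f.injective.eq_iff]
  obtain ⟨u, hu⟩ := hunit
  rw [key, hfac, ← hu]
  constructor
  · intro h
    change (u : AddMonoid.End M) ((p : AddMonoid.End M) x) = 0
    rw [AddMonoid.End.natCast_apply, h, map_zero]
  · intro h
    rw [← AddMonoid.End.natCast_apply]
    have := congrArg (↑u⁻¹ : AddMonoid.End M) h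
    rw [map_zero] at this
    change (((u⁻¹ : _ˣ) : AddMonoid.End M) * (u * p)) x = 0 at this
    rwa [← mul_assoc, u.inv_mul, one_mul] at this

/-- A copy of `G`, to carry the circle operation of a gamma function. -/
def CircGroup (_γ : G → MulAut G) : Type _ := G

/-- The group `(G, ∘)` attached to a gamma function. -/
abbrev IsGammaFunction.circGroup {γ : G → MulAut G} (hγ : IsGammaFunction γ) :
    Group (CircGroup γ) :=
  let mul : G → G → G := circ γ
  let inv : G → G := fun g => (γ g).symm g⁻¹
  let : Mul (CircGroup γ) := ⟨mul⟩
  let : Inv (CircGroup γ) := ⟨inv⟩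
  let : One (CircGroup γ) := ⟨(1 : G)⟩
  Group.ofLeftAxioms
    (fun (a b c : G) => by
      change γ c (γ b a * b) * c = γ (γ c b * c) a * (γ c b * c)
      rw [hγ, map_mul, mul_assoc, MulAut.mul_apply])
    (fun (a : G) => by
      change γ a 1 * a = a
      rw [map_one, one_mul])
    (fun (a : G) => by
      change γ a ((γ a).symm a⁻¹) * a = 1
      rw [MulEquiv.apply_symm_apply, inv_mul_cancel])

section

variable {H : Type*} [Group H] {γ : G → MulAut G} {e : G ≃ H}

lemma map_one_of_circ (he : ∀ g h : G, e (circ γ g h) = e g * e h) : e 1 = 1 := by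
  have := he 1 1
  rw [circ, map_one, mul_one] at this
  exact left_eq_mul.1 this

/-- The action of `(G, ∘)` on `G` by automorphisms given by a gamma function, turned into a left
action. -/
def gammaHom (hγ : IsGammaFunction γ) (he : ∀ g h : G, e (circ γ g h) = e g * e h) :
    H →* MulAut G :=
  MonoidHom.mk' (fun h => γ (e.symm h⁻¹)) fun a b => by
    rw [← hγ]
    congr 1
    rw [e.symm_apply_eq, ← circ, he]
    simp

lemma gammaHom_inv_apply (hγ : IsGammaFunction γ) (he : ∀ g h : G, e (circ γ g h) = e g * e h)
    (g : G) : gammaHom hγ he (e g)⁻¹ = γ g := by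
  simp [gammaHom]

/-- Some Sylow `p`-subgroup of `G` is also a Sylow `p`-subgroup of `(G, ∘)`. -/
lemma exists_sylow_mem_iff {p : ℕ} (hp : p.Prime) [Finite G] (hγ : IsGammaFunction γ)
    (he : ∀ g h : G, e (circ γ g h) = e g * e h) :
    ∃ (A : Sylow p G) (Q : Sylow p H), ∀ g, g ∈ A ↔ e g ∈ Q := by
  have := Fact.mk hp
  have : Finite H := Finite.of_equiv _ e
  have P : Sylow p H := default
  let ρ := gammaHom hγ he
  have he1 := map_one_of_circ he
  obtain ⟨A, hA⟩ : ∃ A : Sylow p G, ∀ h ∈ P, ∀ a ∈ A, ρ h a ∈ A := by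
    let : MulAction P (Sylow p G) := MulAction.compHom _ (ρ.comp (P : Subgroup H).subtype)
    obtain ⟨A, hA⟩ := P.2.nonempty_fixed_point_of_prime_not_dvd_card (Sylow p G)
      (not_dvd_card_sylow p G)
    refine ⟨A, fun h hh a ha => ?_⟩
    have hfix : ρ h • A = A := hA ⟨h, hh⟩
    rw [← hfix]
    exact Subgroup.smul_mem_pointwise_smul a (ρ h) _ ha
  have hmul : ∀ (g : G) (h : H), e.symm (e g * h⁻¹) = ρ h g * e.symm h⁻¹ := by
    intro g h
    rw [e.symm_apply_eq]
    exact ((he g (e.symm h⁻¹)).trans (by rw [e.apply_symm_apply])).symm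
  obtain ⟨x, hx⟩ : ∃ x : G, ∀ h ∈ P, e.symm (e x * h) * x⁻¹ ∈ A := by
    let : MulAction P (Quotient (QuotientGroup.rightRel (A : Subgroup G))) :=
      { smul := fun h => Quotient.map (fun y => e.symm (e y * (h : H)⁻¹)) (by
          intro y z hyz
          change QuotientGroup.rightRel _ _ _ at hyz ⊢
          rw [QuotientGroup.rightRel_apply] at hyz ⊢
          rw [hmul, hmul, mul_inv_rev, mul_assoc, mul_inv_cancel_left, ← map_inv, ← map_mul]
          exact hA _ h.2 _ hyz)
        one_smul := by
          rintro ⟨y⟩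
          exact congrArg (Quotient.mk _) (by simp)
        mul_smul := by
          rintro h k ⟨y⟩
          exact congrArg (Quotient.mk _) (by simp [mul_assoc]) }
    have hcard : ¬ p ∣ Nat.card (Quotient (QuotientGroup.rightRel (A : Subgroup G))) := by
      rw [Nat.card_congr (QuotientGroup.quotientRightRelEquivQuotientLeftRel _)]
      exact A.not_dvd_index
    obtain ⟨⟨x⟩, hx⟩ := P.2.nonempty_fixed_point_of_prime_not_dvd_card _ hcard
    refine ⟨x, fun h hh => ?_⟩
    have := Quotient.exact (hx ⟨h, hh⟩⁻¹).symm
    change QuotientGroup.rightRel _ _ _ at this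
    rw [QuotientGroup.rightRel_apply] at this
    change _ ∈ (A : Subgroup G)
    simpa using this
  let B : Sylow p G := ρ (e x) • A
  let Q : Sylow p H := e x • P
  have hcard : Nat.card B = Nat.card Q := by
    rw [B.card_eq_multiplicity, Q.card_eq_multiplicity, Nat.card_congr e]
  have hsub : e.symm '' (Q : Set H) ⊆ B := by
    rintro _ ⟨_, ⟨h, hh, rfl⟩, rfl⟩
    refine ⟨_, hx h hh, ?_⟩
    change ρ (e x) (e.symm (e x * h) * x⁻¹) = e.symm (e x * h * (e x)⁻¹)
    rw [← e.apply_symm_apply (e x * h), hmul, map_mul, e.apply_symm_apply]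
    congr 1
    rw [map_inv, inv_eq_iff_mul_eq_one, ← hmul, mul_inv_cancel, ← he1, e.symm_apply_apply]
  have heq : e.symm '' (Q : Set H) = B := by
    refine Set.eq_of_subset_of_ncard_le hsub ?_ (Set.toFinite _)
    rw [Set.ncard_image_of_injective _ e.symm.injective]
    exact hcard.le
  refine ⟨B, Q, fun g => ?_⟩
  rw [← SetLike.mem_coe, ← heq]
  simp [Equiv.image_symm_eq_preimage]

end

/-- Theorem `teo:sylow` of the paper.  For a group `G` of order `p²q`
and a gamma function `γ` on `G`, some Sylow `p`-subgroup `A` of `G` is `γ(A)`-invariant;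
and if `p > 2`, the Sylow `p`-subgroups of `G` and of `(G, ∘)` are isomorphic.  (The group
`(G, ∘)` is rendered by quantifying over all groups `H` realising the circle operation.) -/
theorem sylow_invariant_and_isomorphic
    {p q : ℕ} (hp : p.Prime) (hq : q.Prime) (hpq : p ≠ q)
    {G : Type u} [Group G] [Finite G] (hG : Nat.card G = p ^ 2 * q)
    (γ : G → MulAut G) (hγ : IsGammaFunction γ) :
    (∃ A : Sylow p G, ∀ a₁ ∈ (A : Subgroup G), ∀ a₂ ∈ (A : Subgroup G),
      γ a₂ a₁ ∈ (A : Subgroup G)) ∧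
    (2 < p → ∀ (H : Type u) [Group H] (e : G ≃ H),
      (∀ g h : G, e (circ γ g h) = e g * e h) →
      ∀ (P : Sylow p G) (Q : Sylow p H),
        Nonempty ((P : Subgroup G) ≃* (Q : Subgroup H))) := by
  have := Fact.mk hp
  have hinv : ∀ {H : Type u} [Group H] (e : G ≃ H) (A : Sylow p G) (Q : Sylow p H),
      (∀ g h : G, e (circ γ g h) = e g * e h) → (∀ g, g ∈ A ↔ e g ∈ Q) →
      ∀ a₁ ∈ (A : Subgroup G), ∀ a₂ ∈ (A : Subgroup G), γ a₂ a₁ ∈ (A : Subgroup G) := by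
    intro H _ e A Q he hAQ a₁ h₁ a₂ h₂
    have : circ γ a₁ a₂ ∈ A := by
      rw [hAQ, he]
      exact mul_mem ((hAQ _).1 h₁) ((hAQ _).1 h₂)
    exact (Subgroup.mul_mem_cancel_right _ h₂).1 this
  refine ⟨?_, fun hp2 H _ e he P Q => ?_⟩
  · let : Group (CircGroup γ) := hγ.circGroup
    obtain ⟨A, Q, hAQ⟩ := exists_sylow_mem_iff (H := CircGroup γ) (e := Equiv.refl G) hp hγ
      (fun _ _ => rfl)
    exact ⟨A, hinv (H := CircGroup γ) (Equiv.refl G) A Q (fun _ _ => rfl) hAQ⟩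
  · have : Finite H := Finite.of_equiv _ e
    obtain ⟨A, B, hAB⟩ := exists_sylow_mem_iff hp hγ he
    have hA := hinv e A B he hAB
    have hfact : (p ^ 2 * q).factorization p = 2 := by
      rw [Nat.factorization_mul (pow_pos hp.pos 2).ne' hq.ne_zero, hp.factorization_pow,
        hq.factorization]
      simp [hpq.symm]
    have hcardA : Nat.card A = p ^ 2 := by
      rw [A.card_eq_multiplicity, hG, hfact]
    have hcardB : Nat.card B = p ^ 2 := by
      rw [B.card_eq_multiplicity, ← Nat.card_congr e, hG, hfact]
    suffices Nonempty (A ≃* B) from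
      this.map fun f => (P.equiv A).trans (f.trans (B.equiv Q))
    refine nonempty_mulEquiv_of_card_eq_prime_sq hp hcardA hcardB ?_
    let := IsPGroup.commGroupOfCardEqPrimeSq hcardA
    let f : A ≃ B := e.subtypeEquiv hAB
    have hiff : ∀ x : A, x ^ p = 1 ↔ f x ^ p = 1 := by
      intro x
      let σ : A →* A :=
        { toFun := fun a => ⟨γ (x : G) (a : G), hA _ a.2 _ x.2⟩
          map_one' := Subtype.ext (map_one (γ x))
          map_mul' := fun a b => Subtype.ext (map_mul (γ x) (a : G) (b : G)) }
      exact nsmul_prime_eq_zero_iff_pow_eq_one (M := Additive A) (x := x) hp hp2 hcardA f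
        (Subtype.ext (map_one_of_circ he)) (σ := MonoidHom.toAdditive σ)
        (fun a => Subtype.ext (he _ _))
    simp only [hiff, f.forall_congr_left, Equiv.apply_symm_apply]
end HGS
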